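/- Let G be a finite oriented multigraph with a total order ≺ on E(G), A a finite abelian group, and b : V(G) → A locally zero-sum. Then the number of nowhere-zero (A,b)-flows of G equals Σ_{i=0}^{m(G)} (−1)^i a_i(G,b) |A|^{m(G)−i}, where a_i(G,b) is the number of i-element subsets S of E(G) such that G−S is b-compatible and S contains no b-compatible broken bond with respect to ≺. -/

import Mathlib

open Finset

attribute [local instance] Classical.propDecidable

universe u v w

/-- Adjacency through a present edge in the spanning subgraph with edge predicate `ok`. -/
def edgeRel {V E : Type*} (head tail : E → V) (ok : E → Prop) (u v : V) : Prop :=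
  ∃ e, ok e ∧ ((head e = u ∧ tail e = v) ∨ (head e = v ∧ tail e = u))

/-- Reachability (same connected component) in the spanning subgraph. -/
def Reach {V E : Type*} (head tail : E → V) (ok : E → Prop) : V → V → Prop :=
  Relation.EqvGen (edgeRel head tail ok)

/-- Number of connected components of the spanning subgraph. -/
noncomputable def ncomp {V E : Type*} (head tail : E → V) (ok : E → Prop) : ℕ :=
  Nat.card (Quotient (Relation.EqvGen.setoid (edgeRel head tail ok)))

/-- Boundary of an edge-valued function, via the orientation `head`/`tail`. -/
noncomputable def bdry {V E A : Type*} [Fintype E] [AddCommGroup A]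
    (head tail : E → V) (f : E → A) (v : V) : A :=
  ∑ e : E, ((if head e = v then f e else 0) - (if tail e = v then f e else 0))

/-- Boundary of an edge-valued function on the spanning subgraph with edges `ok`. -/
noncomputable def bdrySub {V E A : Type*} [Fintype E] [AddCommGroup A]
    (head tail : E → V) (ok : E → Prop) (f : {e : E // ok e} → A) (v : V) : A :=
  ∑ e : {e : E // ok e}, ((if head e.1 = v then f e else 0) - (if tail e.1 = v then f e else 0))

/-- `b` sums to zero over every connected component of the spanning subgraph
(`b`-compatibility / locally zero-sum). -/
def Compatible {V E A : Type*} [Fintype V] [AddCommGroup A]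
    (head tail : E → V) (ok : E → Prop) (b : V → A) : Prop :=
  ∀ v : V, (∑ u : V, if Reach head tail ok u v then b u else 0) = 0

/-- A bond: a minimal nonempty edge set whose deletion changes the number of components,
equivalently a minimal nonempty edge cut. -/
def IsBond {V E : Type*} (head tail : E → V) (F : Finset E) : Prop :=
  F.Nonempty ∧ ncomp head tail (fun e => e ∉ F) ≠ ncomp head tail (fun _ => True) ∧
    ∀ F' : Finset E, F' ⊂ F → ncomp head tail (fun e => e ∉ F') = ncomp head tail (fun _ => True)

/-- Cycle rank `m(G-S) = |E(G-S)| - |V| + c(G-S)` of the spanning subgraph `G-S`. -/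
noncomputable def cycRank {V E : Type*} [Fintype V] [Fintype E]
    (head tail : E → V) (S : Finset E) : ℕ :=
  (Fintype.card E - S.card) + ncomp head tail (fun e => e ∉ S) - Fintype.card V

/-- A `b`-compatible bond. -/
def IsCBond {V E A : Type*} [Fintype V] [AddCommGroup A]
    (head tail : E → V) (b : V → A) (F : Finset E) : Prop :=
  IsBond head tail F ∧ Compatible head tail (fun e => e ∉ F) b

/-- A `b`-compatible broken bond w.r.t. the total order `lo` on edges. -/
def IsCBrokenBond {V E A : Type*} [Fintype V] [AddCommGroup A]
    (head tail : E → V) (lo : LinearOrder E) (b : V → A) (B : Finset E) : Prop :=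
  ∃ F : Finset E, IsCBond head tail b F ∧
    ∃ hne : F.Nonempty, B = F.erase (@Finset.max' E lo F hne)

/-- The signless coefficient `a_i(G,b)`: the number of `i`-edge subsets `S` with `G-S`
`b`-compatible and `S` containing no `b`-compatible broken bond. -/
noncomputable def aCoeff {V E A : Type*} [Fintype V] [Fintype E] [AddCommGroup A]
    (head tail : E → V) (lo : LinearOrder E) (b : V → A) (i : ℕ) : ℕ :=
  Nat.card {S : Finset E // S.card = i ∧ Compatible head tail (fun e => e ∉ S) b ∧
    ∀ B : Finset E, IsCBrokenBond head tail lo b B → ¬ B ⊆ S}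

/-- Adjacency inside the induced subgraph on the vertex set `X`. -/
def edgeRelIn {V E : Type*} (head tail : E → V) (X : Set V) (u v : V) : Prop :=
  ∃ e, head e ∈ X ∧ tail e ∈ X ∧ ((head e = u ∧ tail e = v) ∨ (head e = v ∧ tail e = u))

/-- Reachability within the induced subgraph on `X`. -/
def ReachIn {V E : Type*} (head tail : E → V) (X : Set V) : V → V → Prop :=
  Relation.EqvGen (edgeRelIn head tail X)

def setoidOn {V E : Type*} (head tail : E → V) (X : Set V) : Setoid {v : V // v ∈ X} :=
  ⟨fun a b => ReachIn head tail X a.1 b.1,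
   ⟨fun a => Relation.EqvGen.refl a.1, fun h => Relation.EqvGen.symm _ _ h, fun h h' => Relation.EqvGen.trans _ _ _ h h'⟩⟩

/-- Number of connected components of the induced subgraph on `X`. -/
noncomputable def ncompOn {V E : Type*} (head tail : E → V) (X : Set V) : ℕ :=
  Nat.card (Quotient (setoidOn head tail X))

/-- `X ∈ Λ(G)`: `X` nonempty, `G[X]` connected and `c(G-X) = c(G)`. -/
def InLambda {V E : Type*} [Fintype V] (head tail : E → V) (X : Finset V) : Prop :=
  X.Nonempty ∧ (∀ u ∈ X, ∀ v ∈ X, ReachIn head tail (↑X) u v) ∧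
    ncompOn head tail ((↑X : Set V)ᶜ) = ncomp head tail (fun _ => True)

theorem aux_invol {E : Type*} [LinearOrder E] [Fintype E] (P : Finset E → E → Prop)
    (N : Finset E → ℤ)
    (hP : ∀ S e e', e' ≤ e → (P (symmDiff S {e}) e' ↔ P S e'))
    (hN : ∀ S e, P S e → N (symmDiff S {e}) = N S) :
    ∑ S ∈ (Finset.univ : Finset (Finset E)).filter (fun S => ∃ e, P S e),
      (-1 : ℤ) ^ S.card * N S = 0 := by
  have hmin : ∀ S, (∃ e, P S e) → ∃ e, P S e ∧ ∀ e', P S e' → e ≤ e' := by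
    rintro S ⟨e, he⟩
    have hne : ((Finset.univ : Finset E).filter (fun e => P S e)).Nonempty := ⟨e, by simp [he]⟩
    refine ⟨Finset.min' _ hne, ?_, ?_⟩
    · have := Finset.min'_mem _ hne
      simpa using this
    · intro e' he'
      exact Finset.min'_le _ _ (by simp [he'])
  rcases isEmpty_or_nonempty E with hE | hE
  · apply Finset.sum_eq_zero
    intro S hS
    obtain ⟨e, -⟩ := (Finset.mem_filter.1 hS).2
    exact (hE.false e).elim
  choose! mu hmu1 hmu2 using hmin
  have hmu : ∀ S, (∃ e, P S e) → mu (symmDiff S {mu S}) = mu S := by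
    intro S hS
    have h1 : P (symmDiff S {mu S}) (mu S) := (hP S _ _ le_rfl).2 (hmu1 S hS)
    apply le_antisymm
    · exact hmu2 _ ⟨_, h1⟩ _ h1
    · by_contra hlt
      push Not at hlt
      have h2 := hmu1 _ ⟨_, h1⟩
      have h3 := (hP S _ _ hlt.le).1 h2
      exact absurd (hmu2 S hS _ h3) (not_le.2 hlt)
  refine Finset.sum_involution (fun S _ => symmDiff S {mu S}) ?_ ?_ ?_ ?_
  · intro S hS
    have hS' : ∃ e, P S e := by simpa using hS
    rw [hN S _ (hmu1 S hS')]
    have : (-1 : ℤ) ^ (symmDiff S {mu S}).card = - (-1 : ℤ) ^ S.card := by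
      by_cases h : mu S ∈ S
      · have h1 : symmDiff S {mu S} = S.erase (mu S) := by
          ext x; simp only [Finset.mem_symmDiff, Finset.mem_singleton, Finset.mem_erase]
          constructor
          · rintro (⟨a, b⟩ | ⟨a, b⟩)
            · exact ⟨b, a⟩
            · exact absurd (a ▸ h) b
          · rintro ⟨a, b⟩; exact Or.inl ⟨b, a⟩
        rw [h1, ← Finset.card_erase_add_one h, pow_succ]; ring
      · have h1 : symmDiff S {mu S} = insert (mu S) S := by
          ext x; simp only [Finset.mem_symmDiff, Finset.mem_singleton, Finset.mem_insert]
          constructor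
          · rintro (⟨a, b⟩ | ⟨a, b⟩)
            · exact Or.inr a
            · exact Or.inl a
          · rintro (a | a)
            · exact Or.inr ⟨a, a ▸ h⟩
            · exact Or.inl ⟨a, fun h' => h (h' ▸ a)⟩
        rw [h1, Finset.card_insert_of_notMem h, pow_succ]; ring
    rw [this]; ring
  · intro S hS _ heq
    have : ({mu S} : Finset E) = ∅ := symmDiff_eq_left.1 heq
    simp at this
  · intro S hS
    have hS' : ∃ e, P S e := by simpa using hS
    simp only [Finset.mem_filter, Finset.mem_univ, true_and]
    exact ⟨mu S, (hP S _ _ le_rfl).2 (hmu1 S hS')⟩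
  · intro S hS
    have hS' : ∃ e, P S e := by simpa using hS
    simp only [hmu S hS']
    exact symmDiff_symmDiff_cancel_right _ _

/-- inclusion-exclusion over the zero set -/
theorem aux_incl_excl {E A : Type*} [Fintype E] [AddCommGroup A] [Fintype A]
    (Q : (E → A) → Prop) :
    (Nat.card {f : E → A // Q f ∧ ∀ e, f e ≠ 0} : ℤ) =
      ∑ S : Finset E, (-1 : ℤ) ^ S.card * (Nat.card {f : E → A // Q f ∧ ∀ e ∈ S, f e = 0} : ℤ) := by
  simp only [Nat.card_eq_fintype_card, Fintype.card_subtype, Finset.card_filter]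
  push_cast
  simp only [Finset.mul_sum]
  rw [Finset.sum_comm]
  apply Finset.sum_congr rfl
  intro f _
  by_cases hQ : Q f
  · simp only [hQ, true_and]
    have := Finset.sum_powerset_neg_one_pow_card (x := (Finset.univ.filter (fun e : E => f e = 0)))
    have h2 : ∑ S : Finset E, (-1 : ℤ) ^ S.card * (if ∀ e ∈ S, f e = 0 then 1 else 0) =
        ∑ S ∈ (Finset.univ.filter (fun e : E => f e = 0)).powerset, (-1 : ℤ) ^ S.card := by
      simp only [mul_ite, mul_one, mul_zero]
      rw [← Finset.sum_filter]
      apply Finset.sum_congr _ (fun _ _ => rfl)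
      ext S
      simp [Finset.subset_iff]
    rw [h2, this]
    simp [Finset.filter_eq_empty_iff]
  · simp [hQ]

noncomputable def bHom {V E : Type*} (A : Type*) [Fintype E] [AddCommGroup A]
    (head tail : E → V) (ok : E → Prop) : ({e : E // ok e} → A) →+ (V → A) where
  toFun := bdrySub head tail ok
  map_zero' := by ext v; simp [bdrySub]
  map_add' f g := by
    ext v
    simp only [bdrySub, Pi.add_apply]
    rw [← Finset.sum_add_distrib]
    apply Finset.sum_congr rfl
    intro e _
    split_ifs <;> abel

noncomputable def sHom {V : Type*} (A : Type*) [Fintype V] [AddCommGroup A] (s : Setoid V) :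
    (V → A) →+ (Quotient s → A) where
  toFun b q := ∑ u, if Quotient.mk s u = q then b u else 0
  map_zero' := by ext v; simp
  map_add' f g := by
    ext v
    simp only [Pi.add_apply]
    rw [← Finset.sum_add_distrib]
    apply Finset.sum_congr rfl
    intro e _
    split_ifs <;> abel

theorem sHom_surj {V A : Type*} [Fintype V] [AddCommGroup A] (s : Setoid V) :
    Function.Surjective (sHom A s) := by
  intro g
  refine ⟨fun v => if v = (Quotient.mk s v).out then g (Quotient.mk s v) else 0, ?_⟩
  ext q
  show (∑ u, if Quotient.mk s u = q then
    (if u = (Quotient.mk s u).out then g (Quotient.mk s u) else 0) else 0) = g q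
  rw [Finset.sum_eq_single q.out]
  · simp
  · intro u _ hu
    split_ifs with h1 h2
    · exact absurd (h1 ▸ h2) hu
    · rfl
    · rfl
  · simp

theorem compat_iff {V E A : Type*} [Fintype V] [AddCommGroup A]
    (head tail : E → V) (ok : E → Prop) (b : V → A) :
    Compatible head tail ok b ↔
      sHom A (Relation.EqvGen.setoid (edgeRel head tail ok)) b = 0 := by
  have key : ∀ v, sHom A (Relation.EqvGen.setoid (edgeRel head tail ok)) b (Quotient.mk _ v) =
      ∑ u : V, if Reach head tail ok u v then b u else 0 := by
    intro v
    show (∑ u, if Quotient.mk _ u = Quotient.mk _ v then b u else 0) = _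
    apply Finset.sum_congr rfl
    intro u _
    simp only [Quotient.eq]
    rfl
  constructor
  · intro h
    ext q
    induction q using Quotient.inductionOn with
    | h v => rw [key, h v]; rfl
  · intro h v
    rw [← key, h]; rfl

theorem edge_reach {V E : Type*} (head tail : E → V) (ok : E → Prop) (e : E) (he : ok e) :
    Reach head tail ok (head e) (tail e) :=
  Relation.EqvGen.rel _ _ ⟨e, he, Or.inl ⟨rfl, rfl⟩⟩

theorem bHom_range {V E A : Type*} [Fintype V] [Fintype E] [AddCommGroup A]
    (head tail : E → V) (ok : E → Prop) :
    (bHom A head tail ok).range =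
      (sHom A (Relation.EqvGen.setoid (edgeRel head tail ok))).ker := by
  set s := Relation.EqvGen.setoid (edgeRel head tail ok) with hs
  apply le_antisymm
  · rintro _ ⟨f, rfl⟩
    rw [AddMonoidHom.mem_ker]
    ext q
    show (∑ u, if Quotient.mk s u = q then
      (∑ e : {e : E // ok e}, ((if head e.1 = u then f e else 0)
        - (if tail e.1 = u then f e else 0))) else 0) = 0
    have : ∀ u, (if Quotient.mk s u = q then
      (∑ e : {e : E // ok e}, ((if head e.1 = u then f e else 0)
        - (if tail e.1 = u then f e else 0))) else 0) =
        ∑ e : {e : E // ok e}, ((if head e.1 = u then (if Quotient.mk s u = q then f e else 0) else 0)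
        - (if tail e.1 = u then (if Quotient.mk s u = q then f e else 0) else 0)) := by
      intro u
      split_ifs <;> simp
    simp only [this]
    rw [Finset.sum_comm]
    apply Finset.sum_eq_zero
    intro e _
    rw [Finset.sum_sub_distrib, Finset.sum_ite_eq, Finset.sum_ite_eq]
    have h : Quotient.mk s (head e.1) = Quotient.mk s (tail e.1) :=
      Quotient.sound (edge_reach head tail ok e.1 e.2)
    simp [h]
  · have h1 : ∀ u v, Reach head tail ok u v → ∀ a : A,
        (Pi.single u a - Pi.single v a : V → A) ∈ (bHom A head tail ok).range := by
      intro u v h a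
      induction h with
      | rel x y h =>
        obtain ⟨e, he, h⟩ := h
        have h3 : (Pi.single (head e) a - Pi.single (tail e) a : V → A) ∈
            (bHom A head tail ok).range := by
          refine ⟨Pi.single ⟨e, he⟩ a, ?_⟩
          ext v
          show (∑ e' : {e : E // ok e}, _) = _
          rw [Finset.sum_eq_single ⟨e, he⟩]
          · simp [Pi.single_apply, eq_comm]
          · intro e' _ hne
            simp [hne]
          · simp
        rcases h with ⟨rfl, rfl⟩ | ⟨rfl, rfl⟩
        · exact h3
        · rw [← neg_sub]; exact neg_mem h3
      | refl x => rw [sub_self]; exact zero_mem _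
      | symm x y _ ih => rw [← neg_sub]; exact neg_mem ih
      | trans x y z _ _ ih1 ih2 =>
        have := add_mem ih1 ih2
        rwa [sub_add_sub_cancel] at this
    intro b hb
    rw [AddMonoidHom.mem_ker] at hb
    have h2 : b = ∑ u, (Pi.single u (b u) - Pi.single (Quotient.mk s u).out (b u) : V → A) := by
      have h3 : ∑ u, (Pi.single (Quotient.mk s u).out (b u) : V → A) = 0 := by
        ext v
        rw [Finset.sum_apply]
        have h4 := congrFun hb (Quotient.mk s v)
        by_cases hv : v = (Quotient.mk s v).out
        · refine Eq.trans ?_ h4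
          show _ = (∑ u, if Quotient.mk s u = Quotient.mk s v then b u else 0)
          apply Finset.sum_congr rfl
          intro u _
          rw [Pi.single_apply]
          apply if_congr _ rfl rfl
          constructor
          · intro h
            rw [h, Quotient.out_eq]
          · intro h
            rw [h, ← hv]
        · apply Finset.sum_eq_zero
          intro u _
          rw [Pi.single_apply, if_neg]
          intro h
          apply hv
          rw [h, Quotient.out_eq]
      rw [Finset.sum_sub_distrib, h3, sub_zero, Finset.univ_sum_single]
    rw [h2]
    apply sum_mem
    intro u _
    apply h1
    exact Quotient.exact (Quotient.out_eq (Quotient.mk s u)).symm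

theorem hom_card {G H : Type*} [AddCommGroup G] [AddCommGroup H] [Finite G] (φ : G →+ H) :
    Nat.card G = Nat.card φ.range * Nat.card φ.ker := by
  rw [AddSubgroup.card_eq_card_quotient_mul_card_addSubgroup φ.ker,
    Nat.card_congr (QuotientAddGroup.quotientKerEquivRange φ).toEquiv]

theorem fiber_card {G H : Type*} [AddCommGroup G] [AddCommGroup H] (φ : G →+ H) (f₀ : G) :
    Nat.card {f // φ f = φ f₀} = Nat.card φ.ker := by
  apply Nat.card_congr
  refine ⟨fun f => ⟨f.1 - f₀, by rw [AddMonoidHom.mem_ker, map_sub, f.2, sub_self]⟩,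
    fun k => ⟨k.1 + f₀, by rw [map_add, AddMonoidHom.mem_ker.1 k.2, zero_add]⟩, ?_, ?_⟩
  · intro f; simp
  · intro f; simp

theorem flow_count {V E A : Type*} [Fintype V] [Fintype E] [AddCommGroup A] [Fintype A]
    (head tail : E → V) (ok : E → Prop) (b : V → A) (hb : Compatible head tail ok b) :
    Nat.card {f // bHom A head tail ok f = b} * Fintype.card A ^ Fintype.card V =
      Fintype.card A ^ (Fintype.card {e // ok e} + ncomp head tail ok) := by
  have hb' := (compat_iff head tail ok b).1 hb
  rw [← AddMonoidHom.mem_ker, ← bHom_range] at hb'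
  obtain ⟨f₀, rfl⟩ := hb'
  rw [fiber_card]
  have h1 := hom_card (bHom A head tail ok)
  have h2 := hom_card (sHom A (Relation.EqvGen.setoid (edgeRel head tail ok)))
  rw [bHom_range] at h1
  rw [AddMonoidHom.range_eq_top.2 (sHom_surj _)] at h2
  simp only [Nat.card_fun, AddSubgroup.card_top] at h1 h2
  rw [Nat.card_eq_fintype_card (α := V), Nat.card_eq_fintype_card (α := A)] at h2
  rw [Nat.card_eq_fintype_card (α := A), Nat.card_eq_fintype_card (α := {e // ok e})] at h1
  rw [h2, pow_add, h1]
  unfold ncomp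
  ring

theorem ncomp_congr {V E : Type*} (head tail : E → V) (ok ok' : E → Prop)
    (h : ∀ u v, Reach head tail ok u v ↔ Reach head tail ok' u v) :
    ncomp head tail ok = ncomp head tail ok' := by
  unfold ncomp
  have : Relation.EqvGen.setoid (edgeRel head tail ok) =
      Relation.EqvGen.setoid (edgeRel head tail ok') := Setoid.ext h
  rw [this]

theorem reach_le {V E : Type*} (head tail : E → V) (ok ok' : E → Prop)
    (h : ∀ e, ok e → Reach head tail ok' (head e) (tail e)) (u v : V)
    (huv : Reach head tail ok u v) : Reach head tail ok' u v := by
  induction huv with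
  | rel x y hxy =>
    obtain ⟨e, he, ⟨rfl, rfl⟩ | ⟨rfl, rfl⟩⟩ := hxy
    · exact h e he
    · exact Relation.EqvGen.symm _ _ (h e he)
  | refl x => exact Relation.EqvGen.refl x
  | symm x y _ ih => exact Relation.EqvGen.symm _ _ ih
  | trans x y z _ _ ih1 ih2 => exact Relation.EqvGen.trans _ _ _ ih1 ih2

theorem bond_sep {V E : Type*} (head tail : E → V) (F : Finset E) (hF : IsBond head tail F)
    (e : E) (he : e ∈ F) : ¬ Reach head tail (fun e => e ∉ F) (tail e) (head e) := by
  intro h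
  obtain ⟨-, h1, h2⟩ := hF
  have h3 := h2 (F.erase e) (Finset.erase_ssubset he)
  apply h1
  rw [← h3]
  apply ncomp_congr
  intro u v
  constructor
  · apply reach_le
    intro x hx
    exact edge_reach head tail (fun e' => e' ∉ F.erase e) x (fun h => hx (Finset.mem_of_mem_erase h))
  · apply reach_le
    intro x hx
    by_cases hxe : x = e
    · subst hxe
      exact Relation.EqvGen.symm _ _ h
    · exact edge_reach head tail (fun e => e ∉ F) x
        (fun h => hx (Finset.mem_erase.2 ⟨hxe, h⟩))

theorem bond_zero {V E A : Type*} [Fintype V] [Fintype E] [AddCommGroup A]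
    (head tail : E → V) (b : V → A) (F : Finset E) (hF : IsCBond head tail b F)
    (e : E) (he : e ∈ F) (f : E → A) (hf : bdry head tail f = b)
    (h0 : ∀ x ∈ F, x ≠ e → f x = 0) : f e = 0 := by
  have hsep := bond_sep head tail F hF.1 e he
  have hc := hF.2 (head e)
  set R : V → Prop := fun u => Reach head tail (fun e => e ∉ F) u (head e) with hR
  have key : (∑ u : V, if R u then bdry head tail f u else 0) =
      ∑ x : E, ((if R (head x) then f x else 0) - (if R (tail x) then f x else 0)) := by
    have : ∀ u, (if R u then bdry head tail f u else 0) =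
        ∑ x : E, ((if head x = u then (if R u then f x else 0) else 0)
        - (if tail x = u then (if R u then f x else 0) else 0)) := by
      intro u
      unfold bdry
      split_ifs <;> simp
    simp only [this]
    rw [Finset.sum_comm]
    apply Finset.sum_congr rfl
    intro x _
    rw [Finset.sum_sub_distrib, Finset.sum_ite_eq, Finset.sum_ite_eq]
    simp
  rw [hf] at key
  have hc' : (∑ u : V, if R u then b u else 0) = 0 := hc
  rw [hc', Finset.sum_eq_single e] at key
  · have h1 : R (head e) := Relation.EqvGen.refl _
    have h2 : ¬ R (tail e) := hsep
    simpa [h1, h2] using key.symm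
  · intro x _ hx
    by_cases hxF : x ∈ F
    · simp [h0 x hxF hx]
    · have hr := edge_reach head tail (fun e => e ∉ F) x hxF
      have : R (head x) ↔ R (tail x) :=
        ⟨fun h => Relation.EqvGen.trans _ _ _ (Relation.EqvGen.symm _ _ hr) h,
          fun h => Relation.EqvGen.trans _ _ _ hr h⟩
      simp [this]
  · simp

theorem bdry_restrict {V E A : Type*} [Fintype E] [AddCommGroup A]
    (head tail : E → V) (S : Finset E) (f : E → A) (h : ∀ e ∈ S, f e = 0) :
    bdry head tail f = bHom A head tail (fun e => e ∉ S) (fun e => f e.1) := by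
  ext v
  have h2 : bHom A head tail (fun e => e ∉ S) (fun e => f e.1) v =
      ∑ e ∈ Finset.univ.filter (fun e => e ∉ S),
        ((if head e = v then f e else 0) - (if tail e = v then f e else 0)) := by
    show bdrySub head tail (fun e => e ∉ S) (fun e => f e.1) v = _
    unfold bdrySub
    exact (Finset.sum_subtype (Finset.univ.filter (fun e => e ∉ S)) (p := fun e => e ∉ S) (by simp)
      (fun e => ((if head e = v then f e else 0) - (if tail e = v then f e else 0)))).symm
  rw [h2]
  unfold bdry
  rw [Finset.sum_filter]
  apply Finset.sum_congr rfl
  intro e _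
  by_cases he : e ∈ S
  · simp [he, h e he]
  · simp [he]

theorem flow_equiv {V E A : Type*} [Fintype E] [AddCommGroup A]
    (head tail : E → V) (S : Finset E) (b : V → A) :
    Nat.card {f : E → A // bdry head tail f = b ∧ ∀ e ∈ S, f e = 0} =
      Nat.card {g // bHom A head tail (fun e => e ∉ S) g = b} := by
  apply Nat.card_congr
  refine ⟨fun f => ⟨fun e => f.1 e.1, by rw [← bdry_restrict head tail S f.1 f.2.2]; exact f.2.1⟩,
    fun g => ⟨fun e => if h : e ∉ S then g.1 ⟨e, h⟩ else 0, ?_, ?_⟩, ?_, ?_⟩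
  · rw [bdry_restrict head tail S]
    · convert g.2 using 2
      ext e
      simp [e.2]
    · intro e he; simp [he]
  · intro e he; simp [he]
  · intro f
    ext e
    by_cases he : e ∈ S
    · simp [he, f.2.2 e he]
    · simp [he]
  · intro g
    ext e
    simp [e.2]

theorem ncomp_le {V E : Type*} [Fintype V] (head tail : E → V) (ok : E → Prop) :
    ncomp head tail ok ≤ Fintype.card V := by
  unfold ncomp
  rw [← Nat.card_eq_fintype_card]
  exact Nat.card_le_card_of_surjective _ Quotient.mk_surjective

theorem rank_nonneg {V E : Type*} [Fintype V] [Fintype E] (head tail : E → V) (ok : E → Prop) :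
    Fintype.card V ≤ Fintype.card {e // ok e} + ncomp head tail ok := by
  have h := flow_count (A := ZMod 2) head tail ok 0 (by intro v; simp)
  have hpos : 0 < Nat.card {f // bHom (ZMod 2) head tail ok f = 0} := by
    rw [Nat.card_pos_iff]
    exact ⟨⟨⟨0, map_zero _⟩⟩, inferInstance⟩
  rw [ZMod.card] at h
  apply (Nat.pow_le_pow_iff_right (a := 2) (by norm_num)).1
  rw [← h]
  exact Nat.le_mul_of_pos_left _ hpos

theorem not_compat_count {V E A : Type*} [Fintype V] [Fintype E] [AddCommGroup A]
    (head tail : E → V) (S : Finset E) (b : V → A)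
    (h : ¬ Compatible head tail (fun e => e ∉ S) b) :
    Nat.card {f : E → A // bdry head tail f = b ∧ ∀ e ∈ S, f e = 0} = 0 := by
  rw [flow_equiv]
  have : IsEmpty {g // bHom A head tail (fun e => e ∉ S) g = b} := by
    constructor
    rintro ⟨g, hg⟩
    apply h
    rw [compat_iff, ← AddMonoidHom.mem_ker, ← bHom_range]
    exact ⟨g, hg⟩
  exact Nat.card_of_isEmpty

theorem compat_mono {V E A : Type*} [Fintype V] [Fintype E] [AddCommGroup A] [Finite A]
    (head tail : E → V) (S F : Finset E) (hFS : F ⊆ S) (b : V → A)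
    (h : Compatible head tail (fun e => e ∉ S) b) :
    Compatible head tail (fun e => e ∉ F) b := by
  by_contra hF
  have h1 := not_compat_count head tail F b hF
  have h2 := h
  rw [compat_iff, ← AddMonoidHom.mem_ker, ← bHom_range] at h2
  obtain ⟨g, hg⟩ := h2
  have h3 : Nat.card {f : E → A // bdry head tail f = b ∧ ∀ e ∈ S, f e = 0} ≠ 0 := by
    rw [flow_equiv]
    have : Nonempty {g // bHom A head tail (fun e => e ∉ S) g = b} := ⟨⟨g, hg⟩⟩
    exact Nat.card_pos.ne'
  have : Nonempty {f : E → A // bdry head tail f = b ∧ ∀ e ∈ S, f e = 0} :=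
    (Nat.card_ne_zero.1 h3).1
  obtain ⟨f, hf1, hf2⟩ := this
  have : Nonempty {f : E → A // bdry head tail f = b ∧ ∀ e ∈ F, f e = 0} :=
    ⟨f, hf1, fun e he => hf2 e (hFS he)⟩
  exact Nat.card_pos.ne' h1

theorem exists_bond {V E : Type*} [Fintype E] (head tail : E → V) (S : Finset E)
    (h : ncomp head tail (fun e => e ∉ S) ≠ ncomp head tail (fun _ => True)) :
    ∃ F ⊆ S, IsBond head tail F := by
  induction S using Finset.strongInduction with
  | H S ih =>
    by_cases hm : ∃ F', F' ⊂ S ∧ ncomp head tail (fun e => e ∉ F') ≠ ncomp head tail (fun _ => True)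
    · obtain ⟨F', h1, h2⟩ := hm
      obtain ⟨F, h3, h4⟩ := ih F' h1 h2
      exact ⟨F, h3.trans h1.1, h4⟩
    · push Not at hm
      refine ⟨S, subset_rfl, ?_, h, hm⟩
      rw [Finset.nonempty_iff_ne_empty]
      rintro rfl
      simp at h

/-- `S` contains a compatible broken bond with missing maximal edge `e`. -/
def BrokenAt {V E A : Type*} [Fintype V] [AddCommGroup A]
    (head tail : E → V) (lo : LinearOrder E) (b : V → A) (S : Finset E) (e : E) : Prop :=
  ∃ F : Finset E, IsCBond head tail b F ∧ e ∈ F ∧ (∀ x ∈ F, x ≤ e) ∧ ∀ x ∈ F, x ≠ e → x ∈ S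

theorem broken_iff {V E A : Type*} [Fintype V] [AddCommGroup A]
    (head tail : E → V) (lo : LinearOrder E) (b : V → A) (S : Finset E) :
    (∀ B : Finset E, IsCBrokenBond head tail lo b B → ¬ B ⊆ S) ↔
      ¬ ∃ e, BrokenAt head tail lo b S e := by
  constructor
  · rintro h ⟨e, F, hF, he, hmax, hS⟩
    have hm : F.max' ⟨e, he⟩ = e :=
      le_antisymm (Finset.max'_le _ _ _ hmax) (Finset.le_max' _ _ he)
    refine h _ ⟨F, hF, ⟨e, he⟩, rfl⟩ ?_
    intro x hx
    rw [Finset.mem_erase, hm] at hx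
    exact hS x hx.2 hx.1
  · rintro h B ⟨F, hF, hne, rfl⟩ hB
    refine h ⟨F.max' hne, F, hF, Finset.max'_mem _ _, fun x hx => Finset.le_max' _ _ hx, ?_⟩
    intro x hx hxe
    exact hB (Finset.mem_erase.2 ⟨hxe, hx⟩)

theorem nbb_count {V E A : Type*} [Fintype V] [Fintype E] [AddCommGroup A] [Fintype A]
    (head tail : E → V) (lo : LinearOrder E) (b : V → A) (S : Finset E)
    (hS : Compatible head tail (fun e => e ∉ S) b) (hn : ¬ ∃ e, BrokenAt head tail lo b S e) :
    S.card ≤ cycRank head tail (∅ : Finset E) ∧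
    Nat.card {f : E → A // bdry head tail f = b ∧ ∀ e ∈ S, f e = 0} =
      Fintype.card A ^ (cycRank head tail (∅ : Finset E) - S.card) := by
  have hc : ncomp head tail (fun e => e ∉ S) = ncomp head tail (fun _ => True) := by
    by_contra h
    obtain ⟨F, hFS, hF⟩ := exists_bond head tail S h
    apply hn
    refine ⟨F.max' hF.1, F, ⟨hF, compat_mono head tail S F hFS b hS⟩, Finset.max'_mem _ _,
      fun x hx => Finset.le_max' _ _ hx, fun x hx _ => hFS hx⟩
  have h1 := rank_nonneg head tail (fun e => e ∉ S)
  have h2 := flow_count head tail (fun e => e ∉ S) b hS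
  have hcard : ∀ inst : Fintype {e // e ∉ S}, @Fintype.card _ inst = Fintype.card E - S.card := by
    intro inst
    rw [Fintype.card_subtype_compl]; simp
  have hle : S.card ≤ Fintype.card E := Finset.card_le_univ S
  rw [hcard, hc] at h1 h2
  have hr : cycRank head tail (∅ : Finset E) =
      Fintype.card E + ncomp head tail (fun _ => True) - Fintype.card V := by
    simp [cycRank]
  have hA : 0 < Fintype.card A := Fintype.card_pos
  refine ⟨by omega, ?_⟩
  rw [flow_equiv]
  apply Nat.eq_of_mul_eq_mul_right (pow_pos hA (Fintype.card V))
  rw [h2, ← pow_add]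
  congr 1
  omega

theorem brokenAt_symmDiff {V E A : Type*} [Fintype V] [AddCommGroup A]
    (head tail : E → V) (lo : LinearOrder E) (b : V → A) (S : Finset E) (e e' : E) (h : e' ≤ e) :
    BrokenAt head tail lo b (symmDiff S {e}) e' ↔ BrokenAt head tail lo b S e' := by
  unfold BrokenAt
  refine exists_congr fun F => and_congr_right fun _ => and_congr_right fun _ =>
    and_congr_right fun hmax => forall_congr' fun x => forall_congr' fun hx =>
    forall_congr' fun hne => ?_
  have : x ≠ e := by
    rintro rfl
    exact hne (le_antisymm (hmax _ hx) h)
  simp [Finset.mem_symmDiff, this]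

theorem brokenAt_count {V E A : Type*} [Fintype V] [Fintype E] [AddCommGroup A] [Fintype A]
    (head tail : E → V) (lo : LinearOrder E) (b : V → A) (S : Finset E) (e : E)
    (h : BrokenAt head tail lo b S e) :
    Nat.card {f : E → A // bdry head tail f = b ∧ ∀ x ∈ symmDiff S {e}, f x = 0} =
    Nat.card {f : E → A // bdry head tail f = b ∧ ∀ x ∈ S, f x = 0} := by
  obtain ⟨F, hF, he, -, hS⟩ := h
  apply Nat.card_congr
  apply Equiv.subtypeEquivRight
  intro f
  apply and_congr_right
  intro hf
  have key : (∀ x ∈ S, x ≠ e → f x = 0) → f e = 0 := fun h0 =>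
    bond_zero head tail b F hF e he f hf (fun x hx hne => h0 x (hS x hx hne) hne)
  constructor
  · intro h x hx
    have h0 : ∀ x ∈ S, x ≠ e → f x = 0 := fun x hx hne => h x (by simp [Finset.mem_symmDiff, hx, hne])
    by_cases hxe : x = e
    · rw [hxe]; exact key h0
    · exact h0 x hx hxe
  · intro h x hx
    by_cases hxe : x = e
    · rw [hxe]; exact key (fun x hx _ => h x hx)
    · apply h
      simpa [Finset.mem_symmDiff, hxe] using hx

/-- broken-bond expansion of the number of nowhere-zero `(A,b)`-flows. -/
theorem stmt11 {V E A : Type*} [Fintype V] [Fintype E] [AddCommGroup A] [Fintype A]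
    (head tail : E → V) (lo : LinearOrder E) (b : V → A)
    (hb : Compatible head tail (fun _ => True) b) :
    (Nat.card {f : E → A // bdry head tail f = b ∧ ∀ e, f e ≠ 0} : ℤ) =
      ∑ i ∈ Finset.range (cycRank head tail (∅ : Finset E) + 1),
        (-1 : ℤ) ^ i * (aCoeff head tail lo b i : ℤ) *
          (Fintype.card A : ℤ) ^ (cycRank head tail (∅ : Finset E) - i) := by
  set m := cycRank head tail (∅ : Finset E) with hm
  set N : Finset E → ℤ := fun S =>
    (Nat.card {f : E → A // bdry head tail f = b ∧ ∀ e ∈ S, f e = 0} : ℤ) with hN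
  have h1 : (Nat.card {f : E → A // bdry head tail f = b ∧ ∀ e, f e ≠ 0} : ℤ) =
      ∑ S : Finset E, (-1 : ℤ) ^ S.card * N S :=
    aux_incl_excl (fun f : E → A => bdry head tail f = b)
  have h2 := aux_invol (BrokenAt head tail lo b) N
    (fun S e e' h => brokenAt_symmDiff head tail lo b S e e' h)
    (fun S e h => congrArg Nat.cast (brokenAt_count head tail lo b S e h))
  rw [h1, ← Finset.sum_filter_add_sum_filter_not _ (fun S => ∃ e, BrokenAt head tail lo b S e),
    h2, zero_add]
  set good : Finset (Finset E) := Finset.univ.filter (fun S =>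
    Compatible head tail (fun e => e ∉ S) b ∧ ¬ ∃ e, BrokenAt head tail lo b S e) with hgood
  have h3 : ∑ S ∈ Finset.univ.filter (fun S => ¬ ∃ e, BrokenAt head tail lo b S e),
      (-1 : ℤ) ^ S.card * N S =
      ∑ S ∈ good, (-1 : ℤ) ^ S.card * (Fintype.card A : ℤ) ^ (m - S.card) := by
    symm
    have hsub : good ⊆ Finset.univ.filter (fun S => ¬ ∃ e, BrokenAt head tail lo b S e) := by
      intro S hS
      exact Finset.mem_filter.2 ⟨Finset.mem_univ _, (Finset.mem_filter.1 hS).2.2⟩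
    rw [← Finset.sum_subset hsub]
    · apply Finset.sum_congr rfl
      intro S hS
      have hS' := (Finset.mem_filter.1 hS).2
      have := (nbb_count head tail lo b S hS'.1 hS'.2).2
      simp only [hN]
      rw [this]
      push_cast
      rfl
    · intro S hS hS2
      have hS' := (Finset.mem_filter.1 hS).2
      have hnc : ¬ Compatible head tail (fun e => e ∉ S) b := fun h =>
        hS2 (Finset.mem_filter.2 ⟨Finset.mem_univ _, h, hS'⟩)
      simp only [hN]
      rw [not_compat_count head tail S b hnc]
      simp
  rw [h3, ← Finset.sum_fiberwise_of_maps_to (t := Finset.range (m + 1)) (g := Finset.card)]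
  · apply Finset.sum_congr rfl
    intro i _
    have ha : aCoeff head tail lo b i = (good.filter (fun S => S.card = i)).card := by
      unfold aCoeff
      rw [Nat.card_eq_fintype_card, Fintype.card_subtype]
      congr 1
      ext S
      simp only [Finset.mem_filter, Finset.mem_univ, true_and, hgood, broken_iff]
      tauto
    rw [ha, Finset.sum_congr rfl (g := fun _ => (-1 : ℤ) ^ i * (Fintype.card A : ℤ) ^ (m - i))]
    · rw [Finset.sum_const, nsmul_eq_mul]
      ring
    · intro S hS
      rw [(Finset.mem_filter.1 hS).2]
  · intro S hS
    have hS' := (Finset.mem_filter.1 hS).2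
    have := (nbb_count head tail lo b S hS'.1 hS'.2).1
    exact Finset.mem_range.2 (Nat.lt_succ_of_le this)
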